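/- arXiv:2111.11828 — 5 statements merged into one kernel-verified Lean document; each statement's English description precedes it below -/
import Mathlib

section
/- Single-sample Discover variance bound: for any θ ∈ ℝ^d and fixed buffers g^{(1)},…,g^{(N)} ∈ ℝ^d, if (n,x) is a sample from the joint distribution Q(n,dx) = p_n ℙ_n(dx), then E[‖D(n,x) − ḡ(θ)‖²] ≤ C₁‖θ − θ*‖² + ∑_{n=1}^N p_n σ_n² + 2·∑_{n=1}^N p_n ‖g^{(n)} − g_n(θ*)‖², where C₁ = 4δ² and σ_n² = 2·E_{x∼ℙ_n}[‖g(x,θ*)‖²]. -/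
open MeasureTheory Finset
open scoped NNReal

theorem aux_int {X E : Type*} [MeasurableSpace X] [NormedAddCommGroup E]
    [InnerProductSpace ℝ E] [CompleteSpace E] (μ : Measure X) [IsProbabilityMeasure μ]
    (f : X → E) (c : E) (h1 : Integrable f μ) (h2 : Integrable (fun x => ‖f x‖ ^ 2) μ) :
    Integrable (fun x => ‖f x + c‖ ^ 2) μ ∧
    ∫ x, ‖f x + c‖ ^ 2 ∂μ = ∫ x, ‖f x‖ ^ 2 ∂μ + 2 * inner ℝ (∫ x, f x ∂μ) c + ‖c‖ ^ 2 := by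
  have hi : Integrable (fun x => 2 * inner ℝ (f x) c) μ := (h1.inner_const c).const_mul 2
  have hc : Integrable (fun _ : X => ‖c‖ ^ 2) μ := integrable_const _
  have he : (fun x => ‖f x + c‖ ^ 2) =
      fun x => (‖f x‖ ^ 2 + 2 * inner ℝ (f x) c) + ‖c‖ ^ 2 := by
    funext x
    rw [norm_add_sq_real]
  have h12 : Integrable (fun x => ‖f x‖ ^ 2 + 2 * inner ℝ (f x) c) μ := h2.add hi
  rw [he]
  refine ⟨h12.add hc, ?_⟩
  rw [integral_add h12 hc, integral_add h2 hi, integral_const_mul]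
  have : ∫ x, inner ℝ (f x) c ∂μ = inner ℝ (∫ x, f x ∂μ) c := by
    rw [real_inner_comm, ← integral_inner h1 c]
    simp_rw [real_inner_comm]
  rw [this]
  simp

theorem aux_sum {E : Type*} [NormedAddCommGroup E]
    [InnerProductSpace ℝ E] {N : ℕ} (p : Fin N → ℝ) (hpsum : ∑ n, p n = 1)
    (a : Fin N → E) (c : E) :
    ∑ n, p n * ‖a n + c‖ ^ 2 =
      ∑ n, p n * ‖a n‖ ^ 2 + 2 * inner ℝ (∑ n, p n • a n) c + ‖c‖ ^ 2 := by
  have h : ∀ n, p n * ‖a n + c‖ ^ 2 =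
      p n * ‖a n‖ ^ 2 + 2 * inner ℝ (p n • a n) c + p n * ‖c‖ ^ 2 := by
    intro n
    rw [norm_add_sq_real, real_inner_smul_left]
    ring
  simp_rw [h]
  rw [sum_add_distrib, sum_add_distrib, ← sum_mul, hpsum, sum_inner, mul_sum, one_mul]

/-- Single-sample Discover variance bound: for a sample `(n,x)` from the
joint distribution `Q(n,dx) = p_n ℙ_n(dx)`,
`E[‖D(n,x) − ḡ(θ)‖²] ≤ 4δ²‖θ − θ*‖² + ∑ p_n σ_n² + 2∑ p_n‖g⁽ⁿ⁾ − g_n(θ*)‖²`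
with `σ_n² = 2·E_{x∼ℙ_n}[‖g(x,θ*)‖²]`. -/
theorem discover_single_sample_variance
    {d : ℕ} {X : Type*} [MeasurableSpace X] {N : ℕ}
    (p : Fin N → ℝ) (P : Fin N → Measure X)
    [∀ n, IsProbabilityMeasure (P n)]
    (hp : ∀ n, 0 < p n) (hpsum : ∑ n, p n = 1)
    (g : X → EuclideanSpace ℝ (Fin d) → EuclideanSpace ℝ (Fin d))
    (hgmeas : ∀ θ', Measurable fun x => g x θ')
    (δ : ℝ≥0)
    (hLip : ∀ n, ∀ᵐ x ∂(P n), LipschitzWith δ (g x))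
    (gbar : Fin N → EuclideanSpace ℝ (Fin d) → EuclideanSpace ℝ (Fin d))
    (hgbar : ∀ n θ', gbar n θ' = ∫ x, g x θ' ∂(P n))
    (θs : EuclideanSpace ℝ (Fin d))
    (hcrit : ∑ n, p n • gbar n θs = 0)
    (θ : EuclideanSpace ℝ (Fin d))
    (gfull : EuclideanSpace ℝ (Fin d))
    (hgfull : gfull = ∑ n, p n • gbar n θ)
    -- the buffers and the Discover per-sample estimator
    (gb : Fin N → EuclideanSpace ℝ (Fin d))
    (D : Fin N × X → EuclideanSpace ℝ (Fin d))
    (hD : ∀ z : Fin N × X, D z = g z.2 θ - gb z.1 + ∑ k, p k • gb k)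
    -- the joint distribution Q on {1,…,N} × 𝒳
    (Q : Measure (Fin N × X))
    (hQ : Q = ∑ n, ENNReal.ofReal (p n) • (P n).map (fun x => (n, x)))
    -- the in-cluster variances
    (σsq : Fin N → ℝ)
    (hσ : ∀ n, σsq n = 2 * ∫ x, ‖g x θs‖ ^ 2 ∂(P n))
    -- integrability of all stated integrands
    (hint1 : ∀ n, Integrable (fun x => g x θ) (P n))
    (hint2 : ∀ n, Integrable (fun x => g x θs) (P n))
    (hint3 : ∀ n, Integrable (fun x => ‖g x θs‖ ^ 2) (P n))
    (hint4 : Integrable (fun z => ‖D z - gfull‖ ^ 2) Q) :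
    ∫ z, ‖D z - gfull‖ ^ 2 ∂Q ≤
      4 * (δ : ℝ) ^ 2 * ‖θ - θs‖ ^ 2 + (∑ n, p n * σsq n) +
        2 * ∑ n, p n * ‖gb n - gbar n θs‖ ^ 2 := by
  set buf := ∑ k, p k • gb k with hbuf
  -- integral over the joint law
  have hDm : Measurable fun z : Fin N × X => ‖D z - gfull‖ ^ 2 := by
    refine measurable_from_prod_countable_right ?_
    intro n
    simp only [hD]
    exact (((((hgmeas θ).sub_const _).add_const _).sub_const _).norm).pow_const 2
  have hQint : ∫ z, ‖D z - gfull‖ ^ 2 ∂Q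
      = ∑ n, p n * ∫ x, ‖D (n, x) - gfull‖ ^ 2 ∂(P n) := by
    have hint5 := hint4
    rw [hQ, integrable_finsetSum_measure] at hint5
    rw [hQ, integral_finsetSum_measure hint5]
    refine sum_congr rfl fun n _ => ?_
    rw [integral_smul_measure, integral_map measurable_prodMk_left.aemeasurable
      hDm.aestronglyMeasurable, ENNReal.toReal_ofReal (hp n).le, smul_eq_mul]
  set e : X → EuclideanSpace ℝ (Fin d) := fun x => g x θ - g x θs with he
  set r : ℝ := δ ^ 2 * ‖θ - θs‖ ^ 2 with hr
  have hr0 : 0 ≤ r := by positivity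
  have hebd : ∀ n, ∀ᵐ x ∂(P n), ‖e x‖ ^ 2 ≤ r := by
    intro n
    filter_upwards [hLip n] with x hx
    have := hx.dist_le_mul θ θs
    rw [dist_eq_norm, dist_eq_norm] at this
    calc ‖e x‖ ^ 2 ≤ (δ * ‖θ - θs‖) ^ 2 := by gcongr
      _ = r := by rw [hr]; ring
  have hei : ∀ n, Integrable e (P n) := fun n => (hint1 n).sub (hint2 n)
  have hei2 : ∀ n, Integrable (fun x => ‖e x‖ ^ 2) (P n) := by
    intro n
    refine Integrable.of_bound ((hei n).aestronglyMeasurable.norm.pow 2) r ?_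
    filter_upwards [hebd n] with x hx
    rw [Real.norm_of_nonneg (by positivity)]
    exact hx
  have hee : ∀ n, ∫ x, e x ∂(P n) = gbar n θ - gbar n θs := by
    intro n
    rw [hgbar, hgbar]
    exact integral_sub (hint1 n) (hint2 n)
  have hesq : ∀ n, ∫ x, ‖e x‖ ^ 2 ∂(P n) ≤ r := by
    intro n
    calc ∫ x, ‖e x‖ ^ 2 ∂(P n) ≤ ∫ _, r ∂(P n) :=
          integral_mono_ae (hei2 n) (integrable_const _) (hebd n)
      _ = r := by simp
  -- cluster bound
  have hcl : ∀ n, ∫ x, ‖D (n, x) - gfull‖ ^ 2 ∂(P n) ≤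
      2 * (r + 2 * inner ℝ (gbar n θ - gbar n θs) (-gfull) + ‖gfull‖ ^ 2)
      + (σsq n + 2 * ‖(gbar n θs - gb n) + buf‖ ^ 2) := by
    intro n
    obtain ⟨i1, j1⟩ := aux_int (P n) e (-gfull) (hei n) (hei2 n)
    obtain ⟨i2, j2⟩ := aux_int (P n) (fun x => g x θs) (buf - gb n) (hint2 n) (hint3 n)
    have hle : ∫ x, ‖D (n, x) - gfull‖ ^ 2 ∂(P n) ≤
        ∫ x, (2 * ‖e x + -gfull‖ ^ 2 + 2 * ‖g x θs + (buf - gb n)‖ ^ 2) ∂(P n) := by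
      refine integral_mono_of_nonneg (Filter.Eventually.of_forall fun x => by positivity)
        ((i1.const_mul 2).add (i2.const_mul 2)) (Filter.Eventually.of_forall fun x => ?_)
      have hx : D (n, x) - gfull = (e x + -gfull) + (g x θs + (buf - gb n)) := by
        rw [hD]
        simp only [he]
        abel
      have hpar := parallelogram_law_with_norm ℝ (e x + -gfull) (g x θs + (buf - gb n))
      simp only [hx]
      nlinarith [sq_nonneg ‖(e x + -gfull) - (g x θs + (buf - gb n))‖]
    rw [integral_add (i1.const_mul 2) (i2.const_mul 2), integral_const_mul,
      integral_const_mul, j1, j2, hee, ← hgbar, norm_neg] at hle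
    have h3 : ‖(gbar n θs - gb n) + buf‖ ^ 2 = ‖gbar n θs‖ ^ 2
        + 2 * inner ℝ (gbar n θs) (buf - gb n) + ‖buf - gb n‖ ^ 2 := by
      rw [← norm_add_sq_real]
      congr 2
      abel
    rw [h3, hσ]
    nlinarith [hesq n, sq_nonneg ‖gbar n θs‖]
  have hsum : ∑ n, p n • (gbar n θ - gbar n θs) = gfull := by
    simp_rw [smul_sub]
    rw [sum_sub_distrib, hcrit, hgfull, sub_zero]
  have hsum2 : ∑ n, p n • (gbar n θs - gb n) = -buf := by
    simp_rw [smul_sub]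
    rw [sum_sub_distrib, hcrit, hbuf, zero_sub]
  have hA := aux_sum p hpsum (fun n => gbar n θs - gb n) buf
  rw [hsum2, inner_neg_left, real_inner_self_eq_norm_sq] at hA
  have hB : ∑ n, p n * inner ℝ (gbar n θ - gbar n θs) (-gfull) = -‖gfull‖ ^ 2 := by
    rw [← real_inner_self_eq_norm_sq, ← inner_neg_right]
    nth_rewrite 2 [← hsum]
    rw [sum_inner]
    exact sum_congr rfl fun n _ => (real_inner_smul_left _ _ _).symm
  have hC : ∀ n, ‖gb n - gbar n θs‖ = ‖gbar n θs - gb n‖ := fun n => norm_sub_rev _ _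
  simp_rw [hC]
  rw [hQint]
  calc ∑ n, p n * ∫ x, ‖D (n, x) - gfull‖ ^ 2 ∂(P n)
      ≤ ∑ n, p n * (2 * (r + 2 * inner ℝ (gbar n θ - gbar n θs) (-gfull) + ‖gfull‖ ^ 2)
        + (σsq n + 2 * ‖(gbar n θs - gb n) + buf‖ ^ 2)) :=
        sum_le_sum fun n _ => mul_le_mul_of_nonneg_left (hcl n) (hp n).le
    _ = ∑ n, (p n * (2 * r + 2 * ‖gfull‖ ^ 2)
          + 4 * (p n * inner ℝ (gbar n θ - gbar n θs) (-gfull))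
          + p n * σsq n + 2 * (p n * ‖(gbar n θs - gb n) + buf‖ ^ 2)) :=
        sum_congr rfl fun n _ => by ring
    _ = (2 * r + 2 * ‖gfull‖ ^ 2) + 4 * (-‖gfull‖ ^ 2) + ∑ n, p n * σsq n
          + 2 * ∑ n, p n * ‖(gbar n θs - gb n) + buf‖ ^ 2 := by
        rw [sum_add_distrib, sum_add_distrib, sum_add_distrib, ← sum_mul, hpsum, ← mul_sum,
          ← mul_sum, hB, one_mul]
    _ ≤ _ := by
        rw [hA]
        have : 4 * (δ : ℝ) ^ 2 * ‖θ - θs‖ ^ 2 = 4 * r := by rw [hr]; ring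
        rw [this]
        nlinarith [sq_nonneg ‖gfull‖, sq_nonneg ‖buf‖]
end

section
/- Buffer recursion (second inequality of the paper's Lemma 2): fix θ ∈ ℝ^d, buffers g^{(1)},…,g^{(N)} ∈ ℝ^d, and α ∈ (0, p_min) where p_min = min_n p_n. Sample (n̂, x) from the joint distribution Q(n,dx) = p_n ℙ_n(dx) and form the updated buffers ĝ^{(n)} = (1 − α/p_n)·g^{(n)} + (α/p_n)·g(x,θ) if n = n̂, and ĝ^{(n)} = g^{(n)} otherwise. Let G = ∑_{n=1}^N p_n ‖g^{(n)} − g_n(θ*)‖² and G' = ∑_{n=1}^N p_n E[‖ĝ^{(n)} − g_n(θ*)‖²]. Then G' ≤ (1 − α)·G + 3αδ²·‖θ − θ*‖² + α·C₂, where C₂ = ∑_{n=1}^N p_n σ_n² and σ_n² = 2·E_{x∼ℙ_n}[‖g(x,θ*)‖²]. -/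
open MeasureTheory Finset
open scoped NNReal

/-- Buffer recursion (second inequality of the paper's Lemma 2): after one
stochastic buffer update using a sample `(n̂,x)` from `Q(n,dx) = p_n ℙ_n(dx)`, the
weighted buffer error satisfies `G' ≤ (1 − α)G + 3αδ²‖θ − θ*‖² + αC₂`. -/
theorem discover_buffer_recursion
    {d : ℕ} {X : Type*} [MeasurableSpace X] {N : ℕ}
    (p : Fin N → ℝ) (P : Fin N → Measure X)
    [∀ n, IsProbabilityMeasure (P n)]
    (hp : ∀ n, 0 < p n) (hpsum : ∑ n, p n = 1)
    (g : X → EuclideanSpace ℝ (Fin d) → EuclideanSpace ℝ (Fin d))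
    (hgmeas : ∀ θ', Measurable fun x => g x θ')
    (δ : ℝ≥0)
    (hLip : ∀ n, ∀ᵐ x ∂(P n), LipschitzWith δ (g x))
    (gbar : Fin N → EuclideanSpace ℝ (Fin d) → EuclideanSpace ℝ (Fin d))
    (hgbar : ∀ n θ', gbar n θ' = ∫ x, g x θ' ∂(P n))
    (θs θ : EuclideanSpace ℝ (Fin d))
    -- buffers, step parameter α ∈ (0, p_min)
    (gb : Fin N → EuclideanSpace ℝ (Fin d))
    (α : ℝ) (hα0 : 0 < α) (hαmin : ∀ n, α < p n)
    -- the joint distribution Q on {1,…,N} × 𝒳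
    (Q : Measure (Fin N × X))
    (hQ : Q = ∑ n, ENNReal.ofReal (p n) • (P n).map (fun x => (n, x)))
    -- updated buffers after observing the sample z = (n̂, x)
    (gbNew : Fin N × X → Fin N → EuclideanSpace ℝ (Fin d))
    (hgbNew : ∀ (z : Fin N × X) (n : Fin N),
      gbNew z n = if n = z.1 then
          (1 - α / p n) • gb n + (α / p n) • g z.2 θ
        else gb n)
    -- the in-cluster variances
    (σsq : Fin N → ℝ)
    (hσ : ∀ n, σsq n = 2 * ∫ x, ‖g x θs‖ ^ 2 ∂(P n))
    -- integrability of all stated integrands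
    (hint1 : ∀ n, Integrable (fun x => g x θ) (P n))
    (hint2 : ∀ n, Integrable (fun x => g x θs) (P n))
    (hint3 : ∀ n, Integrable (fun x => ‖g x θs‖ ^ 2) (P n))
    (hint4 : ∀ n, Integrable (fun z => ‖gbNew z n - gbar n θs‖ ^ 2) Q) :
    (∑ n, p n * ∫ z, ‖gbNew z n - gbar n θs‖ ^ 2 ∂Q) ≤
      (1 - α) * (∑ n, p n * ‖gb n - gbar n θs‖ ^ 2) +
        3 * α * (δ : ℝ) ^ 2 * ‖θ - θs‖ ^ 2 + α * ∑ n, p n * σsq n := by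
  have hQint : ∀ n, ∫ z, ‖gbNew z n - gbar n θs‖ ^ 2 ∂Q
      = ∑ m, p m * ∫ x, ‖gbNew (m, x) n - gbar n θs‖ ^ 2 ∂(P m) := by
    intro n
    have h4 := hint4 n
    rw [hQ, integrable_finsetSum_measure] at h4
    rw [hQ, integral_finsetSum_measure h4]
    refine Finset.sum_congr rfl fun m hm => ?_
    have h5 := h4 m hm
    rw [integrable_smul_measure (by simpa using hp m) ENNReal.ofReal_ne_top] at h5
    rw [integral_smul_measure, integral_map measurable_prodMk_left.aemeasurable
      h5.aestronglyMeasurable, ENNReal.toReal_ofReal (hp m).le, smul_eq_mul]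
  have hI : ∀ n, Integrable (fun x => ‖gbNew (n, x) n - gbar n θs‖ ^ 2) (P n) := by
    intro n
    have h4 := hint4 n
    rw [hQ, integrable_finsetSum_measure] at h4
    have h5 := h4 n (Finset.mem_univ n)
    rw [integrable_smul_measure (by simpa using hp n) ENNReal.ofReal_ne_top] at h5
    exact h5.comp_measurable measurable_prodMk_left
  have hvarI : ∀ n, Integrable (fun x => ‖g x θs - gbar n θs‖ ^ 2) (P n) := by
    intro n
    have : (fun x => ‖g x θs - gbar n θs‖ ^ 2) = fun x =>
        ‖g x θs‖ ^ 2 - 2 * inner ℝ (gbar n θs) (g x θs) + ‖gbar n θs‖ ^ 2 := by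
      funext x
      rw [norm_sub_sq_real, real_inner_comm]
    rw [this]
    exact ((hint3 n).sub (((hint2 n).const_inner _).const_mul 2)).add (integrable_const _)
  have hvar : ∀ n, ∫ x, ‖g x θs - gbar n θs‖ ^ 2 ∂(P n) ≤ ∫ x, ‖g x θs‖ ^ 2 ∂(P n) := by
    intro n
    have : (fun x => ‖g x θs - gbar n θs‖ ^ 2) = fun x =>
        ‖g x θs‖ ^ 2 - 2 * inner ℝ (gbar n θs) (g x θs) + ‖gbar n θs‖ ^ 2 := by
      funext x
      rw [norm_sub_sq_real, real_inner_comm]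
    have hin : Integrable (fun x => 2 * inner ℝ (gbar n θs) (g x θs)) (P n) :=
      ((hint2 n).const_inner _).const_mul 2
    have hsub : Integrable (fun x => ‖g x θs‖ ^ 2 - 2 * inner ℝ (gbar n θs) (g x θs)) (P n) :=
      (hint3 n).sub hin
    rw [this, integral_add hsub (integrable_const _),
      integral_sub (hint3 n) hin, integral_const_mul, integral_inner (hint2 n),
      ← hgbar, real_inner_self_eq_norm_sq]
    simp
    nlinarith [sq_nonneg ‖gbar n θs‖]
  have hown : ∀ n, ∫ x, ‖gbNew (n, x) n - gbar n θs‖ ^ 2 ∂(P n) ≤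
      (1 - α / p n) * ‖gb n - gbar n θs‖ ^ 2
        + α / p n * (2 * (δ : ℝ) ^ 2 * ‖θ - θs‖ ^ 2 + σsq n) := by
    intro n
    have ha0 : 0 ≤ α / p n := (div_pos hα0 (hp n)).le
    have ha1 : 0 ≤ 1 - α / p n := by
      rw [sub_nonneg, div_le_one (hp n)]; exact (hαmin n).le
    have hle : ∫ x, ‖gbNew (n, x) n - gbar n θs‖ ^ 2 ∂(P n) ≤
        ∫ x, (((1 - α / p n) * ‖gb n - gbar n θs‖ ^ 2
        + α / p n * (2 * (δ : ℝ) ^ 2 * ‖θ - θs‖ ^ 2))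
          + α / p n * 2 * ‖g x θs - gbar n θs‖ ^ 2) ∂(P n) := by
      refine integral_mono_ae (hI n)
        ((integrable_const _).add ((hvarI n).const_mul _)) ?_
      filter_upwards [hLip n] with x hx
      have hl : ‖g x θ - g x θs‖ ≤ δ * ‖θ - θs‖ := by
        simpa [dist_eq_norm] using hx.dist_le_mul θ θs
      have e : gbNew (n, x) n - gbar n θs = (1 - α / p n) • (gb n - gbar n θs)
          + (α / p n) • (g x θ - gbar n θs) := by
        rw [hgbNew]; simp only [if_true]; module
      have h1 : ‖gbNew (n, x) n - gbar n θs‖ ≤ (1 - α / p n) * ‖gb n - gbar n θs‖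
          + (α / p n) * ‖g x θ - gbar n θs‖ := by
        rw [e]
        refine (norm_add_le _ _).trans ?_
        rw [norm_smul, norm_smul, Real.norm_of_nonneg ha0, Real.norm_of_nonneg ha1]
      have h2 : ‖g x θ - gbar n θs‖ ≤ δ * ‖θ - θs‖ + ‖g x θs - gbar n θs‖ := by
        have := norm_add_le (g x θ - g x θs) (g x θs - gbar n θs)
        rw [sub_add_sub_cancel] at this
        linarith
      have h3 : ‖g x θ - gbar n θs‖ ^ 2 ≤
          2 * (δ : ℝ) ^ 2 * ‖θ - θs‖ ^ 2 + 2 * ‖g x θs - gbar n θs‖ ^ 2 := by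
        have := pow_le_pow_left₀ (norm_nonneg _) h2 2
        nlinarith [sq_nonneg (δ * ‖θ - θs‖ - ‖g x θs - gbar n θs‖)]
      have h4 := pow_le_pow_left₀ (norm_nonneg _) h1 2
      have h5 := mul_le_mul_of_nonneg_left h3 ha0
      have h6 := mul_nonneg (mul_nonneg ha0 ha1)
        (sq_nonneg (‖gb n - gbar n θs‖ - ‖g x θ - gbar n θs‖))
      show ‖gbNew (n, x) n - gbar n θs‖ ^ 2 ≤ _
      linarith
    rw [integral_add (integrable_const _) ((hvarI n).const_mul _), integral_const_mul] at hle
    simp only [integral_const, probReal_univ, one_smul] at hle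
    have := mul_le_mul_of_nonneg_left (hvar n) (mul_nonneg ha0 zero_le_two)
    rw [hσ]
    linarith
  have hn : ∀ n, ∫ z, ‖gbNew z n - gbar n θs‖ ^ 2 ∂Q ≤
      (1 - α) * ‖gb n - gbar n θs‖ ^ 2
        + α * (2 * (δ : ℝ) ^ 2 * ‖θ - θs‖ ^ 2 + σsq n) := by
    intro n
    rw [hQint, ← Finset.add_sum_erase _ _ (Finset.mem_univ n)]
    have h1 : ∑ m ∈ Finset.univ.erase n, p m * ∫ x, ‖gbNew (m, x) n - gbar n θs‖ ^ 2 ∂(P m)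
        = (1 - p n) * ‖gb n - gbar n θs‖ ^ 2 := by
      rw [← hpsum, ← Finset.add_sum_erase _ p (Finset.mem_univ n), add_sub_cancel_left,
        Finset.sum_mul]
      refine Finset.sum_congr rfl fun m hm => ?_
      have hne : n ≠ m := (Finset.ne_of_mem_erase hm).symm
      simp [hgbNew, hne]
    rw [h1]
    have h2 := mul_le_mul_of_nonneg_left (hown n) (hp n).le
    have h3 : p n * (α / p n) = α := mul_div_cancel₀ _ (hp n).ne'
    have h4 : p n * ((1 - α / p n) * ‖gb n - gbar n θs‖ ^ 2
        + α / p n * (2 * (δ : ℝ) ^ 2 * ‖θ - θs‖ ^ 2 + σsq n)) =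
        (p n - p n * (α / p n)) * ‖gb n - gbar n θs‖ ^ 2
        + p n * (α / p n) * (2 * (δ : ℝ) ^ 2 * ‖θ - θs‖ ^ 2 + σsq n) := by ring
    rw [h4, h3] at h2
    linarith
  have hfin := Finset.sum_le_sum fun n (_ : n ∈ Finset.univ) =>
    mul_le_mul_of_nonneg_left (hn n) (hp n).le
  refine hfin.trans ?_
  have e : ∑ n, p n * ((1 - α) * ‖gb n - gbar n θs‖ ^ 2
        + α * (2 * (δ : ℝ) ^ 2 * ‖θ - θs‖ ^ 2 + σsq n)) =
      (1 - α) * (∑ n, p n * ‖gb n - gbar n θs‖ ^ 2)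
        + (∑ n, p n) * (2 * α * (δ : ℝ) ^ 2 * ‖θ - θs‖ ^ 2) + α * ∑ n, p n * σsq n := by
    rw [Finset.mul_sum, Finset.mul_sum, Finset.sum_mul, ← Finset.sum_add_distrib,
      ← Finset.sum_add_distrib]
    exact Finset.sum_congr rfl fun n _ => by ring
  rw [e, hpsum]
  have : 0 ≤ α * (δ : ℝ) ^ 2 * ‖θ - θs‖ ^ 2 := by positivity
  linarith
end

section
/- Lyapunov one-step recursion (key step in the proof of the paper's Theorem 1): let 0 < ν ≤ δ, α ∈ (0,1), m ≥ 1 an integer, C₂ ≥ 0, C₁ = 4δ², and suppose the step size satisfies 0 < μ ≤ min{νm/(3δ²(m + 5)), α/(6ν)}; set γ = 3μ²/(αm). If nonnegative real sequences (a_t) and (G_t) satisfy, for all t, a_{t+1} ≤ (1 − 2μν + μ²(δ² + C₁/m))·a_t + (μ²/m)·C₂ + (2μ²/m)·G_t and G_{t+1} ≤ (1 − α)·G_t + 3αδ²·a_t + α·C₂, then for all t: a_{t+1} + γ·G_{t+1} ≤ (1 − μν)·(a_t + γ·G_t) + (4μ²/m)·C₂. -/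
/-- Lyapunov one-step recursion (key step in the proof of the paper's
Theorem 1): under the step-size conditions, the Lyapunov function `a_t + γG_t` of the
Discover algorithm contracts by a factor `1 − μν` up to the additive term `(4μ²/m)C₂`. -/
theorem lyapunov_one_step_recursion
    (ν δ α μ : ℝ) (m : ℕ) (C₁ C₂ : ℝ)
    (hν : 0 < ν) (hνδ : ν ≤ δ) (hα0 : 0 < α) (hα1 : α < 1) (hm : 1 ≤ m)
    (hC₁ : C₁ = 4 * δ ^ 2) (hC₂ : 0 ≤ C₂)
    (hμ0 : 0 < μ) (hμ : μ ≤ min (ν * m / (3 * δ ^ 2 * (m + 5))) (α / (6 * ν)))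
    (γ : ℝ) (hγ : γ = 3 * μ ^ 2 / (α * m))
    (a G : ℕ → ℝ) (ha : ∀ t, 0 ≤ a t) (hG : ∀ t, 0 ≤ G t)
    (hrec1 : ∀ t, a (t + 1) ≤
      (1 - 2 * μ * ν + μ ^ 2 * (δ ^ 2 + C₁ / m)) * a t + (μ ^ 2 / m) * C₂
        + (2 * μ ^ 2 / m) * G t)
    (hrec2 : ∀ t, G (t + 1) ≤ (1 - α) * G t + 3 * α * δ ^ 2 * a t + α * C₂) :
    ∀ t, a (t + 1) + γ * G (t + 1) ≤
      (1 - μ * ν) * (a t + γ * G t) + (4 * μ ^ 2 / m) * C₂ := by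
  have hM : (1 : ℝ) ≤ m := by exact_mod_cast hm
  have hM0 : (0 : ℝ) < m := by linarith
  have hδ : 0 < δ := by linarith
  have h1 := hμ.trans (min_le_left _ _)
  have h2 := hμ.trans (min_le_right _ _)
  rw [le_div_iff₀ (by positivity)] at h1 h2
  intro t
  have r1 := hrec1 t
  have r2 := hrec2 t
  have ha' := ha t
  have hG' := hG t
  subst hC₁
  have hγ0 : 0 < γ := by rw [hγ]; positivity
  have hγα : γ * α = 3 * (μ ^ 2 / m) := by rw [hγ]; field_simp
  have e1 : 4 * δ ^ 2 / (m : ℝ) = 4 * δ ^ 2 * (1 / m) := by ring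
  have r2' := mul_le_mul_of_nonneg_left r2 hγ0.le
  have key : μ * (δ ^ 2 + 13 * δ ^ 2 / m) ≤ ν := by
    have : μ * (δ ^ 2 + 13 * δ ^ 2 / m) = μ * δ ^ 2 * (m + 13) / m := by field_simp
    rw [this, div_le_iff₀ hM0]
    have : 0 ≤ μ * δ ^ 2 * (2 * m + 2) := by positivity
    linarith
  have A : μ * (μ * (δ ^ 2 + 13 * δ ^ 2 / m)) * a t ≤ μ * ν * a t := by gcongr
  have B : γ * (μ * (6 * ν)) * G t ≤ γ * α * G t := by gcongr
  have hp : 0 ≤ μ ^ 2 / m * G t := by positivity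
  have s1 : γ * ((1 - α) * G t + 3 * α * δ ^ 2 * a t + α * C₂)
      = γ * G t - γ * α * G t + 3 * (γ * α) * δ ^ 2 * a t + (γ * α) * C₂ := by ring
  rw [s1, hγα] at r2'
  rw [hγα] at B
  ring_nf at *
  linarith
end

section
/- Theorem 1 (convergence of Discover): let 0 < ν ≤ δ, α ∈ (0,1), m ≥ 1 an integer, σ_in² ≥ 0, C₁ = 4δ², and suppose the step size satisfies 0 < μ ≤ min{νm/(3δ²(m + 5)), α/(6ν)} and μν < 1; set γ = 3μ²/(αm) and q = 1 − μν ∈ (0,1). If nonnegative real sequences (a_t) and (G_t) satisfy, for all t, a_{t+1} ≤ (1 − 2μν + μ²(δ² + C₁/m))·a_t + (μ²/m)·σ_in² + (2μ²/m)·G_t and G_{t+1} ≤ (1 − α)·G_t + 3αδ²·a_t + α·σ_in², then for every t ≥ 0: a_t ≤ q^t·(a_0 + γ·G_0) + (4μ/(νm))·σ_in². -/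
/-- Theorem 1 (convergence of Discover): under the step-size conditions,
the expected squared error of the Discover iterates satisfies
`a_t ≤ q^t (a_0 + γ G_0) + (4μ/(νm)) σ_in²` with contraction factor `q = 1 − μν ∈ (0,1)`. -/
theorem discover_convergence
    (ν δ α μ : ℝ) (m : ℕ) (C₁ σin : ℝ)
    (hν : 0 < ν) (hνδ : ν ≤ δ) (hα0 : 0 < α) (hα1 : α < 1) (hm : 1 ≤ m)
    (hC₁ : C₁ = 4 * δ ^ 2) (hσin : 0 ≤ σin)
    (hμ0 : 0 < μ) (hμ : μ ≤ min (ν * m / (3 * δ ^ 2 * (m + 5))) (α / (6 * ν)))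
    (hμν : μ * ν < 1)
    (γ q : ℝ) (hγ : γ = 3 * μ ^ 2 / (α * m)) (hq : q = 1 - μ * ν)
    (a G : ℕ → ℝ) (ha : ∀ t, 0 ≤ a t) (hG : ∀ t, 0 ≤ G t)
    (hrec1 : ∀ t, a (t + 1) ≤
      (1 - 2 * μ * ν + μ ^ 2 * (δ ^ 2 + C₁ / m)) * a t + (μ ^ 2 / m) * σin
        + (2 * μ ^ 2 / m) * G t)
    (hrec2 : ∀ t, G (t + 1) ≤ (1 - α) * G t + 3 * α * δ ^ 2 * a t + α * σin) :
    (0 < q ∧ q < 1) ∧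
      ∀ t, a t ≤ q ^ t * (a 0 + γ * G 0) + (4 * μ / (ν * m)) * σin := by
  have hδ : 0 < δ := lt_of_lt_of_le hν hνδ
  have hM : (1 : ℝ) ≤ (m : ℝ) := by exact_mod_cast hm
  have hM0 : (0 : ℝ) < (m : ℝ) := by linarith
  have hμν0 : 0 < μ * ν := mul_pos hμ0 hν
  have h1 : μ * (3 * δ ^ 2 * (m + 5)) ≤ ν * m :=
    (le_div_iff₀ (by positivity)).1 (hμ.trans (min_le_left _ _))
  have h2 : μ * (6 * ν) ≤ α :=
    (le_div_iff₀ (by positivity)).1 (hμ.trans (min_le_right _ _))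
  obtain ⟨x, hx⟩ : ∃ x : ℝ, x = μ ^ 2 / m := ⟨_, rfl⟩
  have hx0 : 0 < x := by rw [hx]; positivity
  have hxm : x * m = μ ^ 2 := by rw [hx]; field_simp
  have hγα : γ * α = 3 * x := by rw [hγ, hx]; field_simp
  have hγ0 : 0 < γ := by rw [hγ]; positivity
  -- coefficient of `a t`
  have hA : μ ^ 2 * δ ^ 2 + 13 * x * δ ^ 2 ≤ μ * ν := by
    have h3 : μ * (δ ^ 2 * (m + 13)) ≤ ν * m := by
      have : μ * (δ ^ 2 * (m + 13)) ≤ μ * (3 * δ ^ 2 * (m + 5)) := by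
        apply mul_le_mul_of_nonneg_left _ hμ0.le
        nlinarith [sq_nonneg δ, mul_nonneg (sq_nonneg δ) hM0.le]
      linarith
    have h4 := mul_le_mul_of_nonneg_left h3 hμ0.le
    have h5 : (μ ^ 2 * δ ^ 2 + 13 * x * δ ^ 2) * m ≤ μ * ν * m := by
      have : (μ ^ 2 * δ ^ 2 + 13 * x * δ ^ 2) * m = μ * (μ * (δ ^ 2 * (m + 13))) := by
        linear_combination 13 * δ ^ 2 * hxm
      linarith
    exact le_of_mul_le_mul_right h5 hM0
  -- coefficient of `G t`
  have hB : γ * (μ * ν) ≤ x := by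
    nlinarith [mul_le_mul_of_nonneg_left h2 hγ0.le]
  have hstep : ∀ t, a (t + 1) + γ * G (t + 1) ≤ q * (a t + γ * G t) + 4 * x * σin := by
    intro t
    have r1 := hrec1 t
    have r2 := mul_le_mul_of_nonneg_left (hrec2 t) hγ0.le
    have e1 : μ ^ 2 * (δ ^ 2 + C₁ / m) = μ ^ 2 * δ ^ 2 + 4 * x * δ ^ 2 := by
      rw [hC₁, hx]; ring
    have e2 : 2 * μ ^ 2 / m = 2 * x := by rw [hx]; ring
    rw [e1, e2, ← hx] at r1
    have e3 : γ * ((1 - α) * G t + 3 * α * δ ^ 2 * a t + α * σin)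
        = (γ - 3 * x) * G t + 9 * x * δ ^ 2 * a t + 3 * x * σin := by
      linear_combination (-G t + 3 * δ ^ 2 * a t + σin) * hγα
    rw [e3] at r2
    have A := mul_le_mul_of_nonneg_right hA (ha t)
    have B := mul_le_mul_of_nonneg_right hB (hG t)
    rw [hq]
    linarith
  have hq0 : 0 < q := by rw [hq]; linarith
  refine ⟨⟨hq0, by rw [hq]; linarith⟩, ?_⟩
  obtain ⟨K, hK⟩ : ∃ K : ℝ, K = (4 * μ / (ν * m)) * σin := ⟨_, rfl⟩
  have hK0 : 0 ≤ K := by rw [hK]; positivity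
  have hKf : μ * ν * K = 4 * x * σin := by rw [hK, hx]; field_simp
  have hV : ∀ t, a t + γ * G t ≤ q ^ t * (a 0 + γ * G 0) + K := by
    intro t
    induction t with
    | zero => simp only [pow_zero, one_mul]; linarith
    | succ t ih =>
      have h6 := mul_le_mul_of_nonneg_left ih hq0.le
      have h7 : q * (q ^ t * (a 0 + γ * G 0) + K) + 4 * x * σin
          = q ^ (t + 1) * (a 0 + γ * G 0) + K := by
        rw [← hKf, pow_succ]
        linear_combination K * hq
      linarith [hstep t]
  intro t
  rw [← hK]
  linarith [hV t, mul_nonneg hγ0.le (hG t)]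
end

section
/- Steady-state bound (limsup part of Theorem 1): under the hypotheses of Theorem 1 — i.e., 0 < ν ≤ δ, α ∈ (0,1), m ≥ 1, σ_in² ≥ 0, C₁ = 4δ², 0 < μ ≤ min{νm/(3δ²(m + 5)), α/(6ν)}, μν < 1, γ = 3μ²/(αm), and nonnegative sequences (a_t), (G_t) satisfying a_{t+1} ≤ (1 − 2μν + μ²(δ² + C₁/m))·a_t + (μ²/m)·σ_in² + (2μ²/m)·G_t and G_{t+1} ≤ (1 − α)·G_t + 3αδ²·a_t + α·σ_in² for all t — the sequence (a_t) satisfies limsup_{t→∞} a_t ≤ (4μ/(νm))·σ_in²; in particular, the asymptotic expected squared error is O(μ·σ_in²/m) and the between-cluster variance does not appear in the limit. -/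
open Filter

/-- Steady-state bound (limsup part of the paper's Theorem 1): under the
hypotheses of Theorem 1, `limsup_{t→∞} a_t ≤ (4μ/(νm))·σ_in²`; the between-cluster
variance does not appear in the limit. -/
theorem discover_steady_state
    (ν δ α μ : ℝ) (m : ℕ) (C₁ σin : ℝ)
    (hν : 0 < ν) (hνδ : ν ≤ δ) (hα0 : 0 < α) (hα1 : α < 1) (hm : 1 ≤ m)
    (hC₁ : C₁ = 4 * δ ^ 2) (hσin : 0 ≤ σin)
    (hμ0 : 0 < μ) (hμ : μ ≤ min (ν * m / (3 * δ ^ 2 * (m + 5))) (α / (6 * ν)))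
    (hμν : μ * ν < 1)
    (γ : ℝ) (hγ : γ = 3 * μ ^ 2 / (α * m))
    (a G : ℕ → ℝ) (ha : ∀ t, 0 ≤ a t) (hG : ∀ t, 0 ≤ G t)
    (hrec1 : ∀ t, a (t + 1) ≤
      (1 - 2 * μ * ν + μ ^ 2 * (δ ^ 2 + C₁ / m)) * a t + (μ ^ 2 / m) * σin
        + (2 * μ ^ 2 / m) * G t)
    (hrec2 : ∀ t, G (t + 1) ≤ (1 - α) * G t + 3 * α * δ ^ 2 * a t + α * σin) :
    limsup a atTop ≤ (4 * μ / (ν * m)) * σin := by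
  have hM : (1 : ℝ) ≤ m := by exact_mod_cast hm
  have hM0 : (0 : ℝ) < m := by linarith
  have hδ : 0 < δ := by linarith
  have h1 := hμ.trans (min_le_left _ _)
  have h2 := hμ.trans (min_le_right _ _)
  rw [le_div_iff₀ (by positivity)] at h1 h2
  have hγ0 : 0 < γ := by rw [hγ]; positivity
  have hαγ : γ * α = 3 * μ ^ 2 / m := by rw [hγ]; field_simp
  -- contraction in the first component
  have hA : 1 - 2 * μ * ν + μ ^ 2 * (δ ^ 2 + C₁ / m) + 3 * (γ * α) * δ ^ 2 ≤ 1 - μ * ν := by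
    have e : μ * δ ^ 2 * (m + 13) / m ≤ ν := by
      rw [div_le_iff₀ hM0]
      have : 0 < μ * δ ^ 2 := by positivity
      nlinarith
    have e2 : 1 - 2 * μ * ν + μ ^ 2 * (δ ^ 2 + C₁ / m) + 3 * (γ * α) * δ ^ 2
        = 1 - 2 * μ * ν + μ * (μ * δ ^ 2 * (m + 13) / m) := by
      rw [hαγ, hC₁]; field_simp; ring
    rw [e2]
    nlinarith [mul_le_mul_of_nonneg_left e hμ0.le]
  -- contraction in the second component
  have hB : 2 * μ ^ 2 / m + γ * (1 - α) ≤ γ * (1 - μ * ν) := by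
    have e : 2 * μ ^ 2 / m = 2 / 3 * (γ * α) := by rw [hαγ]; ring
    rw [e]
    nlinarith [mul_le_mul_of_nonneg_left h2 hγ0.le, mul_pos hγ0 (mul_pos hμ0 hν)]
  have hL : (1 - μ * ν) * ((4 * μ / (ν * m)) * σin) + 4 * μ ^ 2 / m * σin
      = (4 * μ / (ν * m)) * σin := by
    field_simp; ring
  have hstep : ∀ t, a (t + 1) + γ * G (t + 1)
      ≤ (1 - μ * ν) * (a t + γ * G t) + 4 * μ ^ 2 / m * σin := by
    intro t
    have k1 := hrec1 t
    have k2 := mul_le_mul_of_nonneg_left (hrec2 t) hγ0.le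
    have k3 := mul_le_mul_of_nonneg_right hA (ha t)
    have k4 := mul_le_mul_of_nonneg_right hB (hG t)
    have k5 : μ ^ 2 / m * σin + γ * α * σin = 4 * μ ^ 2 / m * σin := by rw [hαγ]; ring
    linarith
  have hbound : ∀ t, a t + γ * G t
      ≤ (1 - μ * ν) ^ t * (a 0 + γ * G 0) + (4 * μ / (ν * m)) * σin := by
    intro t
    induction t with
    | zero =>
      have : 0 ≤ (4 * μ / (ν * m)) * σin := by positivity
      simpa using this
    | succ t ih =>
      have k := mul_le_mul_of_nonneg_left ih (by linarith : 0 ≤ 1 - μ * ν)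
      have := hstep t
      rw [pow_succ]
      linarith
  have hlim : Tendsto (fun t : ℕ => (1 - μ * ν) ^ t * (a 0 + γ * G 0)
      + (4 * μ / (ν * m)) * σin) atTop (nhds ((4 * μ / (ν * m)) * σin)) := by
    have := (tendsto_pow_atTop_nhds_zero_of_lt_one (by linarith : 0 ≤ 1 - μ * ν)
      (by linarith [mul_pos hμ0 hν])).mul_const (a 0 + γ * G 0)
    simpa using this.add_const ((4 * μ / (ν * m)) * σin)
  rw [← hlim.limsup_eq]
  refine limsup_le_limsup (Eventually.of_forall fun t => ?_) ?_ hlim.isBoundedUnder_le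
  · have := hbound t
    have := mul_nonneg hγ0.le (hG t)
    dsimp only
    linarith
  · exact IsBoundedUnder.isCoboundedUnder_le ⟨0, by simpa using ⟨0, fun t _ => ha t⟩⟩
end
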